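/- arXiv:1805.01857 — 6 statements merged into one kernel-verified Lean document; each statement's English description precedes it below -/
import Mathlib

section
/- Let A be a commutative ring equipped with a ring involution * in which 2 is invertible, and let π ∈ A satisfy π* = −π and the condition that the only hermitian element of A annihilated by π is 0 (i.e., if a* = a and πa = 0 then a = 0) (the ramified even case). Let V be an A-module, h a sesquilinear form on V, and P an A-submodule of V. Then {v ∈ V : (h(v,u))* = h(v,u) for all u ∈ P} = {v ∈ V : h(v,u) = 0 for all u ∈ P}; that is, the orthogonal complement of P with respect to the skew part of h coincides with the orthogonal complement of P with respect to h. -/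
/-!
For fixed `v`, the values `h v u` with `u ∈ P` form an ideal, so if they are all hermitian, then so
are their multiples by `π`. But for `a` hermitian `π * a` is skew-hermitian; being also hermitian,
it vanishes because `2` is cancellable, and then `a = 0` by the condition on `π`.
-/

theorem mul_eq_zero_of_map_eq_self {A : Type*} [Ring A] {σ : A →+* A}
    (h2 : IsLeftRegular (2 : A)) {π a : A} (hπ : σ π = -π)
    (ha : σ a = a) (hπa : σ (π * a) = π * a) : π * a = 0 := by
  have eq_neg : π * a = -(π * a) :=
    calc
      π * a = σ (π * a) := hπa.symm
      _ = -(π * a) := by rw [map_mul, hπ, ha, neg_mul]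
  apply h2.mul_left_eq_zero_iff.mp
  rw [two_mul]
  exact eq_neg_iff_add_eq_zero.mp eq_neg

theorem ideal_eq_bot_of_forall_map_eq_self {A : Type*} [Ring A] {σ : A →+* A}
    (h2 : IsLeftRegular (2 : A)) {π : A} (hπ : σ π = -π)
    (hann : ∀ a : A, σ a = a → π * a = 0 → a = 0)
    {I : Ideal A} (hI : ∀ a ∈ I, σ a = a) : I = ⊥ :=
  (Submodule.eq_bot_iff I).mpr fun a ha ↦
    hann a (hI a ha) <|
      mul_eq_zero_of_map_eq_self h2 hπ (hI a ha) (hI _ (I.mul_mem_left π ha))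

theorem stmt_3_general {A V W : Type*} [Ring A] [AddCommGroup V] [Module A V]
    {σ : A →+* A} (h2 : IsLeftRegular (2 : A)) {π : A} (hπ : σ π = -π)
    (hann : ∀ a : A, σ a = a → π * a = 0 → a = 0)
    (h : W → V →ₗ[A] A) (P : Submodule A V) :
    {w : W | ∀ u ∈ P, σ (h w u) = h w u} = {w : W | ∀ u ∈ P, h w u = 0} := by
  ext w
  constructor
  · intro hw u hu
    have map_eq_bot : P.map (h w) = ⊥ :=
      ideal_eq_bot_of_forall_map_eq_self h2 hπ hann <| by
        rintro _ ⟨u, hu, rfl⟩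
        exact hw u hu
    exact (Submodule.eq_bot_iff _).mp map_eq_bot _ (Submodule.mem_map_of_mem hu)
  · intro hw u hu
    rw [hw u hu, map_zero]

/-- Ramified even case: if `π* = -π` and the only hermitian element of `A`
annihilated by `π` is `0`, then for any sesquilinear form `h` on an
`A`-module `V` and any submodule `P`, the orthogonal complement of `P` with
respect to the skew part of `h` coincides with the orthogonal complement of
`P` with respect to `h`. -/
theorem stmt_3 {A V : Type*} [CommRing A] [AddCommGroup V] [Module A V]
    (σ : A →+* A) (hσ : ∀ a : A, σ (σ a) = a)
    (h2 : IsUnit (2 : A))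
    (π : A) (hπ : σ π = -π)
    (hann : ∀ a : A, σ a = a → π * a = 0 → a = 0)
    (h : V → V → A)
    (hadd₁ : ∀ x x' y : V, h (x + x') y = h x y + h x' y)
    (hadd₂ : ∀ x y y' : V, h x (y + y') = h x y + h x y')
    (hsmul₁ : ∀ (a : A) (x y : V), h (a • x) y = σ a * h x y)
    (hsmul₂ : ∀ (a : A) (x y : V), h x (a • y) = a * h x y)
    (P : Submodule A V) :
    {v : V | ∀ u ∈ P, σ (h v u) = h v u} = {v : V | ∀ u ∈ P, h v u = 0} :=
  stmt_3_general h2.isRegular.left hπ hann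
    (fun v ↦ { toFun := h v, map_add' := hadd₂ v, map_smul' := fun a ↦ hsmul₂ a v }) P
end

section
/- Let A be a commutative ring equipped with a ring involution * in which 2 is invertible, and let π ∈ A satisfy π* = −π and the condition that the only skew-hermitian element of A annihilated by π is 0 (i.e., if a* = −a and πa = 0 then a = 0) (the ramified odd case). Let V be an A-module, h a sesquilinear form on V, and P an A-submodule of V. Then {v ∈ V : (h(v,u))* = −h(v,u) for all u ∈ P} = {v ∈ V : h(v,u) = 0 for all u ∈ P}. -/
section SkewHermitian

variable {A : Type*} [Ring A] {σ : A →+* A} {π : A}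

theorem mul_eq_zero_of_map_eq_neg {a : A} (h2 : IsLeftRegular (2 : A)) (hπ : σ π = -π)
    (ha : σ a = -a) (hπa : σ (π * a) = -(π * a)) : π * a = 0 := by
  have eq_neg_self : π * a = -(π * a) :=
    calc
      π * a = -π * -a := (neg_mul_neg π a).symm
      _ = σ (π * a) := by rw [map_mul, hπ, ha]
      _ = -(π * a) := hπa
  apply h2.mul_left_eq_zero_iff.mp
  rw [two_mul, add_eq_zero_iff_eq_neg]
  exact eq_neg_self

theorem ideal_forall_map_eq_neg_iff_eq_bot (h2 : IsLeftRegular (2 : A)) (hπ : σ π = -π)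
    (hann : ∀ a : A, σ a = -a → π * a = 0 → a = 0) (I : Ideal A) :
    (∀ a ∈ I, σ a = -a) ↔ I = ⊥ := by
  constructor
  · intro hI
    refine (Submodule.eq_bot_iff I).mpr fun a ha => hann a (hI a ha) ?_
    exact mul_eq_zero_of_map_eq_neg h2 hπ (hI a ha) (hI _ (I.mul_mem_left π ha))
  · rintro rfl a ha
    rw [Ideal.mem_bot.mp ha, map_zero, neg_zero]

theorem stmt_4_general {V W : Type*} [AddCommMonoid V] [Module A V]
    (h2 : IsLeftRegular (2 : A)) (hπ : σ π = -π)
    (hann : ∀ a : A, σ a = -a → π * a = 0 → a = 0)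
    (h : W → V →ₗ[A] A) (P : Submodule A V) :
    {w : W | ∀ u ∈ P, σ (h w u) = -h w u} = {w : W | ∀ u ∈ P, h w u = 0} := by
  ext w
  calc
    (∀ u ∈ P, σ (h w u) = -h w u) ↔ ∀ a ∈ P.map (h w), σ a = -a := by
      simp only [Submodule.mem_map, forall_exists_index, and_imp, forall_apply_eq_imp_iff₂]
    _ ↔ P.map (h w) = ⊥ := ideal_forall_map_eq_neg_iff_eq_bot h2 hπ hann _
    _ ↔ ∀ u ∈ P, h w u = 0 := LinearMap.le_ker_iff_map.symm

end SkewHermitian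

/-- Ramified odd case: if `π* = -π` and the only skew-hermitian element of `A`
annihilated by `π` is `0`, then for any sesquilinear form `h` on an
`A`-module `V` and any submodule `P`, the vectors `v` with `h(v,u)`
skew-hermitian for all `u ∈ P` are exactly those with `h(v,u) = 0` for all
`u ∈ P`. -/
theorem stmt_4 {A V : Type*} [CommRing A] [AddCommGroup V] [Module A V]
    (σ : A →+* A) (hσ : ∀ a : A, σ (σ a) = a)
    (h2 : IsUnit (2 : A))
    (π : A) (hπ : σ π = -π)
    (hann : ∀ a : A, σ a = -a → π * a = 0 → a = 0)
    (h : V → V → A)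
    (hadd₁ : ∀ x x' y : V, h (x + x') y = h x y + h x' y)
    (hadd₂ : ∀ x y y' : V, h x (y + y') = h x y + h x y')
    (hsmul₁ : ∀ (a : A) (x y : V), h (a • x) y = σ a * h x y)
    (hsmul₂ : ∀ (a : A) (x y : V), h x (a • y) = a * h x y)
    (P : Submodule A V) :
    {v : V | ∀ u ∈ P, σ (h v u) = -h v u} = {v : V | ∀ u ∈ P, h v u = 0} :=
  stmt_4_general h2.isRegular.left hπ hann
    (fun v => { toFun := h v, map_add' := hadd₂ v, map_smul' := fun a => hsmul₂ a v }) P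
end

section
/- Let A be a commutative ring equipped with a ring involution * in which 2 is invertible, and let i, j be ideals of A such that a* ∈ j for every a ∈ j, j² ⊆ i, and i² = (0). Then for z ∈ j, one has (1+z)·(1+z)* = 1 if and only if there exists s ∈ j with s* = −s and z = s²/2 + s; moreover such s is unique (it is the skew-hermitian part of z). In particular, the elements of N ∩ (1+j) are exactly those of the form 1 + s²/2 + s with s a skew-hermitian element of j, and s ↦ 1 + s²/2 + s is a bijection from the skew-hermitian elements of j onto N ∩ (1+j). -/
/-!
If `s* = -s`, then `1 + s²/2 + s` has norm `(1 + s²/2)² - s² = 1 + s⁴/4`. Conversely, if `1 + z`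
has norm one, then `z + z* = -zz*`, so the skew-hermitian part `s = (z - z*)/2` satisfies
`s² = (z + z*)²/4 - zz* = (zz*)²/4 + z + z*`. Since also `z* = -z(1 + z)*`, the term `(zz*)²`
vanishes as soon as `z⁴ = 0`; then `s² = z + z*`, and hence `s²/2 + s = z`. The norm equation
alone forces `z** = z` and `z ∣ z*`, so `s` is skew-hermitian and a multiple of `z`.
-/

theorem map_map_eq_self_of_mul_map_eq_one {M F : Type*} [Monoid M] [FunLike F M M]
    [MonoidHomClass F M M] {f : F} {a : M} (h : a * f a = 1) : f (f a) = a :=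
  (left_inv_eq_right_inv h (by rw [← map_mul, h, map_one])).symm

theorem map_eq_neg_mul_map_of_norm_eq_one {A : Type*} [Ring A] {σ : A →+* A} {z : A}
    (h : (1 + z) * σ (1 + z) = 1) : σ z = -(z * σ (1 + z)) := by
  rw [add_mul, one_mul] at h
  rw [eq_neg_iff_add_eq_zero, ← add_right_inj (1 : A), ← add_assoc, add_zero]
  rwa [map_add, map_one] at h ⊢

theorem mul_map_sq_eq_zero_of_norm_eq_one {A : Type*} [CommRing A] {σ : A →+* A} {z : A}
    (h : (1 + z) * σ (1 + z) = 1) (hz : z ^ 4 = 0) : (z * σ z) ^ 2 = 0 := by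
  rw [map_eq_neg_mul_map_of_norm_eq_one h]
  linear_combination σ (1 + z) ^ 2 * hz

theorem map_invOf_two {A B : Type*} [Semiring A] [Semiring B] [Invertible (2 : A)]
    [Invertible (2 : B)] (f : A →+* B) : f ⅟2 = ⅟2 :=
  Eq.symm <| invOf_eq_right_inv <| calc
    2 * f ⅟2 = f (2 * ⅟2) := by rw [map_mul, map_ofNat]
    _ = 1 := by rw [mul_invOf_self, map_one]

section Ring

variable {A : Type*} [Ring A] [Invertible (2 : A)]

/-- The skew-hermitian part `(z - z*) / 2` of `z`, where `z* = σ z`. For an arbitrary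
ring endomorphism `σ`, it is skew-hermitian when `z** = z`. -/
def skewPart (σ : A →+* A) (z : A) : A :=
  ⅟2 * (z - σ z)

variable {σ : A →+* A} {s z : A}

theorem skewPart_one_add : skewPart σ (1 + z) = skewPart σ z := by
  rw [skewPart, skewPart, map_add, map_one, add_sub_add_left_eq_sub]

theorem map_skewPart (h : σ (σ z) = z) : σ (skewPart σ z) = -skewPart σ z := by
  rw [skewPart, map_mul, map_sub, map_invOf_two, h, ← mul_neg, neg_sub]

theorem map_half_sq_add (hs : σ s = -s) : σ (⅟2 * s ^ 2 + s) = ⅟2 * s ^ 2 - s := by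
  rw [map_add, map_mul, map_pow, map_invOf_two, hs, neg_sq, sub_eq_add_neg]

theorem skewPart_half_sq_add (hs : σ s = -s) : skewPart σ (⅟2 * s ^ 2 + s) = s := by
  rw [skewPart, map_half_sq_add hs, add_sub_sub_cancel, ← two_mul, invOf_mul_cancel_left]

theorem map_skewPart_of_norm_eq_one (h : (1 + z) * σ (1 + z) = 1) :
    σ (skewPart σ z) = -skewPart σ z := by
  simpa only [skewPart_one_add] using map_skewPart (map_map_eq_self_of_mul_map_eq_one h)

end Ring

section CommRing

variable {A : Type*} [CommRing A] [Invertible (2 : A)] {σ : A →+* A} {s z : A}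

theorem one_add_half_sq_add_mul_map (hs : σ s = -s) :
    (1 + (⅟2 * s ^ 2 + s)) * σ (1 + (⅟2 * s ^ 2 + s)) = 1 + ⅟2 ^ 2 * s ^ 4 := by
  rw [map_add, map_one, map_half_sq_add hs]
  linear_combination s ^ 2 * mul_invOf_self (2 : A)

theorem dvd_skewPart (h : z ∣ σ z) : z ∣ skewPart σ z :=
  (dvd_sub dvd_rfl h).mul_left _

theorem dvd_skewPart_of_norm_eq_one (h : (1 + z) * σ (1 + z) = 1) : z ∣ skewPart σ z :=
  dvd_skewPart <| map_eq_neg_mul_map_of_norm_eq_one h ▸ (dvd_mul_right z _).neg_right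

theorem skewPart_sq_of_norm_eq_one (h : (1 + z) * σ (1 + z) = 1) (hz : z ^ 4 = 0) :
    skewPart σ z ^ 2 = z + σ z := by
  have add_map : z + σ z = -(z * σ z) := by
    rw [map_add, map_one] at h
    linear_combination h
  have half_sq : ⅟(2 : A) ^ 2 * 4 = 1 := by
    linear_combination (2 * ⅟(2 : A) + 1) * mul_invOf_self (2 : A)
  calc
    skewPart σ z ^ 2 = ⅟2 ^ 2 * (z + σ z) ^ 2 - ⅟2 ^ 2 * 4 * (z * σ z) := by
      rw [skewPart]
      ring
    _ = z + σ z := by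
      rw [half_sq, add_map, neg_sq, mul_map_sq_eq_zero_of_norm_eq_one h hz, mul_zero, one_mul,
        zero_sub]

theorem half_sq_skewPart_add_skewPart (h : (1 + z) * σ (1 + z) = 1) (hz : z ^ 4 = 0) :
    ⅟2 * skewPart σ z ^ 2 + skewPart σ z = z := by
  rw [skewPart_sq_of_norm_eq_one h hz, skewPart, ← mul_add, add_add_sub_cancel, ← two_mul,
    invOf_mul_cancel_left]

end CommRing

theorem stmt_7_general {A : Type*} [CommRing A] [Invertible (2 : A)] (σ : A →+* A)
    (j : Ideal A) (hj : ∀ a ∈ j, a ^ 4 = 0) :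
    (∀ z ∈ j, ((1 + z) * σ (1 + z) = 1 ↔
      ∃! s : A, s ∈ j ∧ σ s = -s ∧ z = ⅟(2 : A) * s ^ 2 + s)) ∧
    Set.BijOn (fun s : A => 1 + ⅟(2 : A) * s ^ 2 + s)
      {s : A | s ∈ j ∧ σ s = -s}
      {a : A | a * σ a = 1 ∧ ∃ z ∈ j, a = 1 + z} := by
  have norm_eq_one {s : A} (hs : s ∈ j) (hskew : σ s = -s) :
      (1 + (⅟2 * s ^ 2 + s)) * σ (1 + (⅟2 * s ^ 2 + s)) = 1 := by
    rw [one_add_half_sq_add_mul_map hskew, hj s hs, mul_zero, add_zero]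
  have skewPart_mem {z : A} (hz : z ∈ j) (h : (1 + z) * σ (1 + z) = 1) : skewPart σ z ∈ j :=
    j.mem_of_dvd (dvd_skewPart_of_norm_eq_one h) hz
  simp only [add_assoc]
  refine ⟨fun z hz => ⟨fun h => ?_, ?_⟩, Set.InvOn.bijOn (f' := skewPart σ) ⟨?_, ?_⟩ ?_ ?_⟩
  · refine ⟨skewPart σ z, ⟨skewPart_mem hz h, map_skewPart_of_norm_eq_one h,
      (half_sq_skewPart_add_skewPart h (hj z hz)).symm⟩, ?_⟩
    rintro s ⟨-, hskew, rfl⟩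
    exact (skewPart_half_sq_add hskew).symm
  · rintro ⟨s, ⟨hs, hskew, rfl⟩, -⟩
    exact norm_eq_one hs hskew
  · rintro s ⟨-, hskew⟩
    exact skewPart_one_add.trans (skewPart_half_sq_add hskew)
  · rintro _ ⟨h, z, hz, rfl⟩
    simp only [skewPart_one_add, half_sq_skewPart_add_skewPart h (hj z hz)]
  · rintro s ⟨hs, hskew⟩
    exact ⟨norm_eq_one hs hskew, _,
      j.add_mem (j.mul_mem_left _ (j.pow_mem_of_mem hs 2 two_pos)) hs, rfl⟩
  · rintro _ ⟨h, z, hz, rfl⟩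
    rw [skewPart_one_add]
    exact ⟨skewPart_mem hz h, map_skewPart_of_norm_eq_one h⟩

/-- Let `i, j` be ideals with `j` `*`-invariant, `j² ⊆ i` and `i² = (0)`, in a
commutative ring with involution in which 2 is invertible. Then for `z ∈ j`,
`(1+z)(1+z)* = 1` iff `z = s²/2 + s` for a unique skew-hermitian `s ∈ j`.
Consequently `s ↦ 1 + s²/2 + s` is a bijection from the skew-hermitian
elements of `j` onto `N ∩ (1 + j)`. -/
theorem stmt_7 {A : Type*} [CommRing A]
    (σ : A →+* A) (hσ : ∀ a : A, σ (σ a) = a)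
    [Invertible (2 : A)]
    (i j : Ideal A) (hjstar : ∀ a ∈ j, σ a ∈ j)
    (hji : j * j ≤ i) (hi2 : i * i = ⊥) :
    (∀ z ∈ j, ((1 + z) * σ (1 + z) = 1 ↔
      ∃! s : A, s ∈ j ∧ σ s = -s ∧ z = ⅟(2 : A) * s ^ 2 + s)) ∧
    Set.BijOn (fun s : A => 1 + ⅟(2 : A) * s ^ 2 + s)
      {s : A | s ∈ j ∧ σ s = -s}
      {a : A | a * σ a = 1 ∧ ∃ z ∈ j, a = 1 + z} :=
  stmt_7_general σ j fun a ha => by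
    have h : a * a * (a * a) ∈ i * i :=
      Ideal.mul_mem_mul (hji (Ideal.mul_mem_mul ha ha)) (hji (Ideal.mul_mem_mul ha ha))
    rw [hi2, Ideal.mem_bot] at h
    linear_combination h
end

section
/- Let A be a commutative ring equipped with a ring involution * and let i be an ideal of A with i² = (0) and a* ∈ i for every a ∈ i. Let V be an A-module and h a skew-hermitian sesquilinear form on V. Then for every a ∈ i and arbitrary vectors z₁, z₂ ∈ V (not assumed isotropic or orthogonal), the map ρ : V → V defined by ρ(x) = x + a·h(z₁,x)•z₂ + (a*)·h(z₂,x)•z₁ is A-linear, satisfies h(ρ(x), ρ(y)) = h(x,y) for all x, y ∈ V, and satisfies ρ(x) − x ∈ iV for all x ∈ V; that is, ρ lies in the congruence subgroup Ω(i) of the unitary group of h. -/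
/-!
Write `ρ = 1 + N`. The rank-two map `N` is skew-adjoint because `h` is skew-hermitian, so the terms
of `h (ρ x) (ρ y) - h x y` that are linear in `N` cancel, leaving `h (N x) (N y)`. Since `N` maps
`V` into `iV`, that last term lies in `i* i ⊆ i² = 0`.
-/

section Sesquilinear

variable {R A M N : Type*} [CommSemiring R] [CommSemiring A] [AddCommMonoid M] [AddCommMonoid N]
  [Module R M] [Module A N] {σ : R →+* A}

theorem sesqForm_apply_mem_map_mul (B : M →ₛₗ[σ] N →ₗ[A] A) {I : Ideal R} {J : Ideal A} {x : M}
    {y : N} (hx : x ∈ I • (⊤ : Submodule R M)) (hy : y ∈ J • (⊤ : Submodule A N)) :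
    B x y ∈ I.map σ * J := by
  induction hx using Submodule.smul_induction_on' with
  | smul r hr x _ =>
    have hxy : B x y ∈ J := by
      simpa only [Submodule.mem_comap, smul_eq_mul, Ideal.mul_top] using
        Submodule.smul_top_le_comap_smul_top J (B x) hy
    rw [LinearMap.map_smulₛₗ₂, smul_eq_mul]
    exact Ideal.mul_mem_mul (Ideal.mem_map_of_mem σ hr) hxy
  | add x _ x' _ hx hx' =>
    rw [LinearMap.map_add₂]
    exact add_mem hx hx'

end Sesquilinear

section SkewRankTwo

variable {A V : Type*} [CommSemiring A] [AddCommMonoid V] [Module A V] {σ : A →+* A}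

/-- The rank-two endomorphism `x ↦ a h(u, x) v + a* h(v, x) u` attached to a sesquilinear form
`h = B`, with `a* = σ a`. For skew-hermitian `h` it lies in the Lie algebra of the unitary group. -/
def skewRankTwo (B : V →ₛₗ[σ] V →ₗ[A] A) (a : A) (u v : V) : V →ₗ[A] V :=
  (a • B u).smulRight v + (σ a • B v).smulRight u

theorem skewRankTwo_apply (B : V →ₛₗ[σ] V →ₗ[A] A) (a : A) (u v x : V) :
    skewRankTwo B a u v x = (a * B u x) • v + (σ a * B v x) • u :=
  rfl

theorem skewRankTwo_apply_mem_smul_top (B : V →ₛₗ[σ] V →ₗ[A] A) {I : Ideal A} {a : A}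
    (ha : a ∈ I) (hσa : σ a ∈ I) (u v x : V) :
    skewRankTwo B a u v x ∈ I • (⊤ : Submodule A V) :=
  add_mem (Submodule.smul_mem_smul (I.mul_mem_right _ ha) Submodule.mem_top)
    (Submodule.smul_mem_smul (I.mul_mem_right _ hσa) Submodule.mem_top)

end SkewRankTwo

section SkewAdjoint

variable {A V : Type*} [CommRing A] [AddCommGroup V] [Module A V] {σ : A →+* A}

theorem sesqForm_add_apply_of_skewAdjoint (B : V →ₛₗ[σ] V →ₗ[A] A) {I : Ideal A}
    (hI : I.map σ * I = ⊥) {f : V → V} (hf : ∀ x y, B (f x) y = -B x (f y))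
    (hfI : ∀ x, f x ∈ I • (⊤ : Submodule A V)) (x y : V) :
    B (x + f x) (y + f y) = B x y := by
  have hquad : B (f x) (f y) = 0 := by
    simpa only [hI, Ideal.mem_bot] using sesqForm_apply_mem_map_mul B (hfI x) (hfI y)
  calc B (x + f x) (y + f y)
      = B x y + (B x (f y) + B (f x) y) + B (f x) (f y) := by
        rw [LinearMap.map_add₂, map_add, map_add]
        ring
    _ = B x y := by rw [hf x y, hquad, add_neg_cancel, add_zero, add_zero]

theorem skewRankTwo_skewAdjoint (B : V →ₛₗ[σ] V →ₗ[A] A) (hB : ∀ x y, B y x = -σ (B x y)) {a : A}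
    (ha : σ (σ a) = a) (u v x y : V) :
    B (skewRankTwo B a u v x) y = -B x (skewRankTwo B a u v y) := by
  simp only [skewRankTwo_apply, LinearMap.map_add₂, LinearMap.map_smulₛₗ₂, (B x).map_add,
    (B x).map_smul, smul_eq_mul, map_mul, ha, hB u x, hB v x]
  ring

end SkewAdjoint

/-- If `i` is a `*`-invariant ideal with `i² = (0)` and `h` is a
skew-hermitian sesquilinear form on `V`, then for every `a ∈ i` and arbitrary
`z₁, z₂ ∈ V` the map `ρ(x) = x + a·h(z₁,x)•z₂ + a*·h(z₂,x)•z₁` is `A`-linear,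
preserves `h`, and satisfies `ρ(x) - x ∈ iV`; that is, `ρ ∈ Ω(i)`. -/
theorem stmt_10 {A V : Type*} [CommRing A] [AddCommGroup V] [Module A V]
    (σ : A →+* A) (hσ : ∀ a : A, σ (σ a) = a)
    (i : Ideal A) (hi2 : i * i = ⊥) (histar : ∀ a ∈ i, σ a ∈ i)
    (h : V → V → A)
    (hadd₁ : ∀ x x' y : V, h (x + x') y = h x y + h x' y)
    (hadd₂ : ∀ x y y' : V, h x (y + y') = h x y + h x y')
    (hsmul₁ : ∀ (a : A) (x y : V), h (a • x) y = σ a * h x y)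
    (hsmul₂ : ∀ (a : A) (x y : V), h x (a • y) = a * h x y)
    (hskew : ∀ x y : V, h y x = -σ (h x y))
    (a : A) (ha : a ∈ i) (z₁ z₂ : V) :
    let ρ : V → V := fun x => x + (a * h z₁ x) • z₂ + (σ a * h z₂ x) • z₁
    (∀ x y : V, ρ (x + y) = ρ x + ρ y) ∧
    (∀ (c : A) (x : V), ρ (c • x) = c • ρ x) ∧
    (∀ x y : V, h (ρ x) (ρ y) = h x y) ∧
    (∀ x : V, ρ x - x ∈ i • (⊤ : Submodule A V)) := by
  intro ρ
  let B : V →ₛₗ[σ] V →ₗ[A] A := LinearMap.mk₂'ₛₗ σ (RingHom.id A) h hadd₁ hsmul₁ hadd₂ hsmul₂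
  let N : V →ₗ[A] V := skewRankTwo B a z₁ z₂
  have hρ (x : V) : ρ x = x + N x := add_assoc _ _ _
  have hρ_lin : ρ = ⇑(LinearMap.id + N : V →ₗ[A] V) := funext hρ
  have hN_mem : ∀ x, N x ∈ i • (⊤ : Submodule A V) :=
    skewRankTwo_apply_mem_smul_top B ha (histar a ha) z₁ z₂
  have hN_skew : ∀ x y, B (N x) y = -B x (N y) := skewRankTwo_skewAdjoint B hskew (hσ a) z₁ z₂
  have hi : i.map σ * i = ⊥ :=
    le_bot_iff.mp (hi2 ▸ Ideal.mul_mono_left (Ideal.map_le_iff_le_comap.mpr histar))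
  refine ⟨fun x y => ?_, fun c x => ?_, fun x y => ?_, fun x => ?_⟩
  · rw [hρ_lin, map_add]
  · rw [hρ_lin, map_smul]
  · rw [hρ, hρ]
    exact sesqForm_add_apply_of_skewAdjoint B hi hN_skew hN_mem x y
  · rw [hρ, add_sub_cancel_left]
    exact hN_mem x
end

section
/- Let A be a commutative ring, let i be an ideal of A with i² = (0), and let V be an A-module. If g₁, g₂ : V → V are A-linear maps satisfying g₁(v) − v ∈ iV and g₂(v) − v ∈ iV for all v ∈ V, then g₁ ∘ g₂ = g₂ ∘ g₁. (That is, if k² = (0) then the congruence subgroup Ω(k) is abelian.) -/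
/-!
Write `g₁ = 1 + φ₁` and `g₂ = 1 + φ₂`, where `φ₁` and `φ₂` map `V` into `iV`. By linearity
`φ₁ (φ₂ V) ⊆ φ₁ (iV) = i (φ₁ V) ⊆ i²V = 0`, and symmetrically `φ₂ ∘ φ₁ = 0`. Hence `φ₁` and `φ₂`
commute, and so do `1 + φ₁` and `1 + φ₂`.
-/

theorem range_comp_le_smul_smul_top {A U V W : Type*} [Semiring A]
    [AddCommMonoid U] [Module A U] [AddCommMonoid V] [Module A V] [AddCommMonoid W] [Module A W]
    {i j : Ideal A} {φ : V →ₗ[A] W} {ψ : U →ₗ[A] V}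
    (hφ : LinearMap.range φ ≤ i • ⊤) (hψ : LinearMap.range ψ ≤ j • ⊤) :
    LinearMap.range (φ ∘ₗ ψ) ≤ j • i • ⊤ :=
  calc LinearMap.range (φ ∘ₗ ψ)
    _ = (LinearMap.range ψ).map φ := LinearMap.range_comp ψ φ
    _ ≤ (j • ⊤ : Submodule A V).map φ := Submodule.map_mono hψ
    _ = j • LinearMap.range φ := by rw [Submodule.map_smul'', Submodule.map_top]
    _ ≤ j • i • ⊤ := smul_mono_right j hφ

theorem commute_of_commute_sub_one {R : Type*} [Ring R] {a b : R}
    (h : Commute (a - 1) (b - 1)) : Commute a b := by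
  simpa only [sub_add_cancel] using
    (h.add_left (Commute.one_left _)).add_right (Commute.one_right _)

theorem stmt_13_general {A V : Type*} [Semiring A] [AddCommGroup V] [Module A V]
    {i j : Ideal A} (hij : i • j • (⊤ : Submodule A V) = ⊥) (hji : j • i • (⊤ : Submodule A V) = ⊥)
    {g₁ g₂ : Module.End A V}
    (hg₁ : ∀ v : V, g₁ v - v ∈ i • (⊤ : Submodule A V))
    (hg₂ : ∀ v : V, g₂ v - v ∈ j • (⊤ : Submodule A V)) :
    Commute g₁ g₂ := by
  have hφ₁ : LinearMap.range (g₁ - 1) ≤ i • ⊤ := by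
    rintro _ ⟨v, rfl⟩
    exact hg₁ v
  have hφ₂ : LinearMap.range (g₂ - 1) ≤ j • ⊤ := by
    rintro _ ⟨v, rfl⟩
    exact hg₂ v
  have h₁₂ : (g₁ - 1) * (g₂ - 1) = 0 :=
    LinearMap.range_eq_bot.mp <| le_bot_iff.mp <| hji ▸ range_comp_le_smul_smul_top hφ₁ hφ₂
  have h₂₁ : (g₂ - 1) * (g₁ - 1) = 0 :=
    LinearMap.range_eq_bot.mp <| le_bot_iff.mp <| hij ▸ range_comp_le_smul_smul_top hφ₂ hφ₁
  exact commute_of_commute_sub_one (h₁₂.trans h₂₁.symm)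

/-- If `i² = (0)` and `g₁, g₂` are `A`-linear maps congruent to the identity
modulo `iV`, then `g₁` and `g₂` commute: if `k² = (0)` then the congruence
subgroup `Ω(k)` is abelian. -/
theorem stmt_13 {A V : Type*} [CommRing A] [AddCommGroup V] [Module A V]
    (i : Ideal A) (hi2 : i * i = ⊥)
    (g₁ g₂ : V →ₗ[A] V)
    (hg₁ : ∀ v : V, g₁ v - v ∈ i • (⊤ : Submodule A V))
    (hg₂ : ∀ v : V, g₂ v - v ∈ i • (⊤ : Submodule A V)) :
    ∀ v : V, g₁ (g₂ v) = g₂ (g₁ v) := by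
  have hi : i • i • (⊤ : Submodule A V) = ⊥ := by rw [← Submodule.mul_smul, hi2, Submodule.bot_smul]
  exact LinearMap.congr_fun (stmt_13_general hi hi hg₁ hg₂).eq
end

section
/- Let A be a commutative ring equipped with a ring involution *, and let i, j be ideals of A with a* ∈ i for every a ∈ i and i·j = (0). Let V be an A-module, h a skew-hermitian sesquilinear form on V, and define f(x,y) = h(x,y) + (h(x,y))*. Fix t ∈ V. Let x : V → V be an A-linear map with x(t) − t ∈ jV, and let g : V → V be an A-linear map with g(v) − v ∈ iV for all v ∈ V. Then f(g(x(t)), x(t)) = f(g(t), t). (This is the key identity showing that every element of G_t stabilizes the linear character α_t of Ω(i).) -/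
/-!
Since `i * j = 0`, the map `g - 1`, whose values lie in `i V`, vanishes on `j V`, and `i V` is
orthogonal to `j V` under `h` because `i` is `σ`-stable. Hence `h ((g - 1) v) v` depends only on
the class of `v` modulo `j V`. Skewness makes `f v v = 0`, so that `f (g v) v = f ((g - 1) v) v`.
-/

section Annihilation

variable {A B M N P : Type*} [CommSemiring A] [CommSemiring B] [AddCommMonoid M]
  [AddCommMonoid N] [AddCommMonoid P]

theorem smul_le_ker_of_map_le_smul [Module A M] [Module A N] {i j : Ideal A} (hij : i * j = ⊥)
    {f : M →ₗ[A] N} {S : Submodule A M} {T : Submodule A N} (hf : S.map f ≤ i • T) :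
    j • S ≤ LinearMap.ker f := by
  rw [LinearMap.le_ker_iff_map, Submodule.map_smul'', eq_bot_iff]
  calc j • S.map f ≤ j • i • T := Submodule.smul_mono le_rfl hf
    _ = (i * j) • T := by rw [← Submodule.mul_smul, mul_comm]
    _ = ⊥ := by rw [hij, Submodule.bot_smul]

variable [Module A M] [Module B N] [Module B P] {σ : A →+* B}

theorem sesqForm_apply_mem_map_smul_top (h : M →ₛₗ[σ] N →ₗ[B] P) {i : Ideal A} {w : M}
    (hw : w ∈ i • (⊤ : Submodule A M)) (v : N) :
    h w v ∈ i.map σ • (⊤ : Submodule B P) := by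
  induction hw using Submodule.smul_induction_on' with
  | smul a ha m _ =>
    rw [LinearMap.map_smulₛₗ₂]
    exact Submodule.smul_mem_smul (Ideal.mem_map_of_mem σ ha) Submodule.mem_top
  | add m _ m' _ hm hm' =>
    rw [LinearMap.map_add₂]
    exact add_mem hm hm'

theorem sesqForm_apply_eq_zero_of_mem_smul_top (h : M →ₛₗ[σ] N →ₗ[B] P) {i : Ideal A}
    {j : Ideal B} (hij : i.map σ * j = ⊥) {w : M} (hw : w ∈ i • (⊤ : Submodule A M)) {v : N}
    (hv : v ∈ j • (⊤ : Submodule B N)) : h w v = 0 := by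
  have hrange : (⊤ : Submodule B N).map (h w) ≤ i.map σ • (⊤ : Submodule B P) := by
    rintro _ ⟨n, -, rfl⟩
    exact sesqForm_apply_mem_map_smul_top h hw n
  exact LinearMap.mem_ker.1 (smul_le_ker_of_map_le_smul hij hrange hv)

end Annihilation

section Congruence

variable {A V W P : Type*} [CommRing A] [AddCommGroup V] [Module A V] {σ : A →+* A}
  {i j : Ideal A}

theorem sesqForm_apply_self_congr [AddCommGroup W] [Module A W] [AddCommGroup P] [Module A P]
    (hσi : i ≤ i.comap σ) (hij : i * j = ⊥) (h : W →ₛₗ[σ] V →ₗ[A] P) {d : V →ₗ[A] W}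
    (hd : LinearMap.range d ≤ i • ⊤) {u t : V} (hut : u - t ∈ j • (⊤ : Submodule A V)) :
    h (d u) u = h (d t) t := by
  have hdut : d u = d t := by
    rw [LinearMap.range_eq_map] at hd
    exact LinearMap.sub_mem_ker_iff.1 (smul_le_ker_of_map_le_smul hij hd hut)
  have hσij : i.map σ * j = ⊥ :=
    eq_bot_mono (Ideal.mul_mono_left (Ideal.map_le_iff_le_comap.2 hσi)) hij
  have horth : h (d t) (u - t) = 0 :=
    sesqForm_apply_eq_zero_of_mem_smul_top h hσij (hd (LinearMap.mem_range_self d t)) hut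
  rw [hdut, ← sub_eq_zero, ← map_sub, horth]

theorem sesqForm_sub_self_add_map (h : V →ₛₗ[σ] V →ₗ[A] A) {v : V}
    (hv : h v v + σ (h v v) = 0) (w : V) :
    h (w - v) v + σ (h (w - v) v) = h w v + σ (h w v) := by
  rw [LinearMap.map_sub₂, map_sub]
  linear_combination -hv

theorem stmt_15_general (hσi : i ≤ i.comap σ) (hij : i * j = ⊥) (h : V →ₛₗ[σ] V →ₗ[A] A)
    (hdiag : ∀ v, h v v + σ (h v v) = 0) {u t : V} (hut : u - t ∈ j • (⊤ : Submodule A V))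
    (g : V →ₗ[A] V) (hg : ∀ v, g v - v ∈ i • (⊤ : Submodule A V)) :
    h (g u) u + σ (h (g u) u) = h (g t) t + σ (h (g t) t) := by
  have hrange : LinearMap.range (g - LinearMap.id) ≤ i • ⊤ := by
    rintro _ ⟨v, rfl⟩
    exact hg v
  have hdisp : h (g u - u) u = h (g t - t) t := sesqForm_apply_self_congr hσi hij h hrange hut
  rw [← sesqForm_sub_self_add_map h (hdiag u), hdisp, sesqForm_sub_self_add_map h (hdiag t)]

end Congruence

/-- Key identity showing that every element of `G_t` stabilizes the linear
character `α_t` of `Ω(i)`: with `i` `*`-invariant, `i·j = (0)`, `h` a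
skew-hermitian sesquilinear form, `f = h + σ ∘ h`, `x` linear with
`x(t) - t ∈ jV` and `g` linear with `g(v) - v ∈ iV` for all `v`, one has
`f(g(x(t)), x(t)) = f(g(t), t)`. -/
theorem stmt_15 {A V : Type*} [CommRing A] [AddCommGroup V] [Module A V]
    (σ : A →+* A) (hσ : ∀ a : A, σ (σ a) = a)
    (i j : Ideal A) (histar : ∀ a ∈ i, σ a ∈ i) (hij : i * j = ⊥)
    (h : V → V → A)
    (hadd₁ : ∀ x x' y : V, h (x + x') y = h x y + h x' y)
    (hadd₂ : ∀ x y y' : V, h x (y + y') = h x y + h x y')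
    (hsmul₁ : ∀ (a : A) (x y : V), h (a • x) y = σ a * h x y)
    (hsmul₂ : ∀ (a : A) (x y : V), h x (a • y) = a * h x y)
    (hskew : ∀ x y : V, h y x = -σ (h x y))
    (t : V)
    (x : V →ₗ[A] V) (hx : x t - t ∈ j • (⊤ : Submodule A V))
    (g : V →ₗ[A] V) (hg : ∀ v : V, g v - v ∈ i • (⊤ : Submodule A V)) :
    h (g (x t)) (x t) + σ (h (g (x t)) (x t)) = h (g t) t + σ (h (g t) t) :=
  stmt_15_general histar hij (LinearMap.mk₂'ₛₗ σ (RingHom.id A) h hadd₁ hsmul₁ hadd₂ hsmul₂)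
    (fun v => eq_neg_iff_add_eq_zero.1 (hskew v v)) hx g hg
end
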